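/- Let S be a Borel subset of a Polish space, let K be a bounded linear operator mapping C_b(S) into itself which is non-negative and such that K^k is a compact operator for some integer k ≥ 1, and let μ be a Borel probability measure on S satisfying μ(U) > 0 for every nonempty open subset U of S. Then (∫_S (K^n 𝟙)(x) μ(dx))^(1/n) converges, as n → ∞, to the spectral radius λ(K), where 𝟙 denotes the constant function equal to 1; equivalently, ∫_S K^n 𝟙 dμ = λ(K)^(n+o(n)). -/

import Mathlib

open Filter MeasureTheory BoundedContinuousFunction Topology

/-!
The Neumann series `f = ∑ (t⁻¹ K)ⁿ 1`, for `t` slightly above the spectral radius `λ`, satisfies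
`K f = t (f - 1) ≤ t (1 - ‖f‖⁻¹) f` and `1 ≤ f`. A function `f ≥ 1` with `K f ≤ s f` forces
`λ ≤ s`, so `‖f‖` must blow up as `t ↓ λ`, and the functions `f / ‖f‖` are approximate eigenvectors
for `λ`. Compactness of `K ^ k` turns them, when `λ > 0`, into a genuine eigenvector `0 ≤ z ≤ 1`,
`K z = λ z`. Then `λⁿ ∫ z ≤ ∫ Kⁿ 1 ≤ μ(S) ‖Kⁿ‖`, and taking `n`-th roots gives the claim, since
`∫ z > 0`. Only the order unit `1` matters, not that the elements are functions.
-/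

section NthRoots

lemma tendsto_const_rpow_one_div {c : ℝ} (hc : 0 < c) :
    Tendsto (fun n : ℕ => c ^ (1 / (n : ℝ))) atTop (𝓝 1) := by
  simpa using (tendsto_const_nhds (x := c)).rpow
    (tendsto_one_div_atTop_nhds_zero_nat (𝕜 := ℝ)) (.inl hc.ne')

lemma tendsto_pow_rpow_one_div {a : ℝ} (ha : 0 ≤ a) :
    Tendsto (fun n : ℕ => (a ^ n) ^ (1 / (n : ℝ))) atTop (𝓝 a) := by
  refine tendsto_const_nhds.congr' ?_
  filter_upwards [eventually_ne_atTop 0] with n hn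
  rw [one_div, Real.pow_rpow_inv_natCast ha hn]

lemma tendsto_mul_rpow_one_div {u v : ℕ → ℝ} {a b : ℝ} (hu₀ : ∀ n, 0 ≤ u n) (hv₀ : ∀ n, 0 ≤ v n)
    (hu : Tendsto (fun n : ℕ => u n ^ (1 / (n : ℝ))) atTop (𝓝 a))
    (hv : Tendsto (fun n : ℕ => v n ^ (1 / (n : ℝ))) atTop (𝓝 b)) :
    Tendsto (fun n : ℕ => (u n * v n) ^ (1 / (n : ℝ))) atTop (𝓝 (a * b)) := by
  simpa only [Real.mul_rpow (hu₀ _) (hv₀ _)] using hu.mul hv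

lemma tendsto_mul_const_rpow_one_div {u : ℕ → ℝ} {a c : ℝ} (hu₀ : ∀ n, 0 ≤ u n) (hc : 0 < c)
    (hu : Tendsto (fun n : ℕ => u n ^ (1 / (n : ℝ))) atTop (𝓝 a)) :
    Tendsto (fun n : ℕ => (u n * c) ^ (1 / (n : ℝ))) atTop (𝓝 a) := by
  simpa using tendsto_mul_rpow_one_div hu₀ (fun _ => hc.le) hu (tendsto_const_rpow_one_div hc)

lemma tendsto_rpow_one_div_of_le_of_le {l u v : ℕ → ℝ} {a : ℝ} (hl₀ : ∀ n, 0 ≤ l n)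
    (hlu : ∀ n, l n ≤ u n) (huv : ∀ n, u n ≤ v n)
    (hl : Tendsto (fun n : ℕ => l n ^ (1 / (n : ℝ))) atTop (𝓝 a))
    (hv : Tendsto (fun n : ℕ => v n ^ (1 / (n : ℝ))) atTop (𝓝 a)) :
    Tendsto (fun n : ℕ => u n ^ (1 / (n : ℝ))) atTop (𝓝 a) :=
  tendsto_of_tendsto_of_tendsto_of_le_of_le hl hv
    (fun n => Real.rpow_le_rpow (hl₀ n) (hlu n) (by positivity))
    fun n => Real.rpow_le_rpow ((hl₀ n).trans (hlu n)) (huv n) (by positivity)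

lemma tendsto_zero_rpow_one_div : Tendsto (fun n : ℕ => (0 : ℝ) ^ (1 / (n : ℝ))) atTop (𝓝 0) := by
  refine tendsto_const_nhds.congr' ?_
  filter_upwards [eventually_ne_atTop 0] with n hn
  rw [Real.zero_rpow (by positivity)]

lemma summable_of_tendsto_norm_rpow_one_div {E : Type*} [NormedAddCommGroup E] [CompleteSpace E]
    {u : ℕ → E} {l : ℝ} (hl : l < 1)
    (hu : Tendsto (fun n : ℕ => ‖u n‖ ^ (1 / (n : ℝ))) atTop (𝓝 l)) : Summable u := by
  obtain ⟨q, hlq, hq⟩ := exists_between hl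
  have hl₀ : 0 ≤ l := ge_of_tendsto' hu fun n => by positivity
  refine (summable_geometric_of_lt_one (hl₀.trans hlq.le) hq).of_norm_bounded_eventually_nat ?_
  filter_upwards [hu.eventually_lt_const hlq, eventually_ne_atTop 0] with n hun hn
  calc ‖u n‖ = (‖u n‖ ^ (1 / (n : ℝ))) ^ n := by
        rw [one_div, Real.rpow_inv_natCast_pow (norm_nonneg _) hn]
    _ ≤ q ^ n := pow_le_pow_left₀ (by positivity) hun.le n

lemma summable_inv_smul_pow {𝕜 A : Type*} [NormedField 𝕜] [NormedRing A] [NormedAlgebra 𝕜 A]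
    [CompleteSpace A] {a : A} {r : ℝ} {t : 𝕜}
    (hr : Tendsto (fun n : ℕ => ‖a ^ n‖ ^ (1 / (n : ℝ))) atTop (𝓝 r)) (ht : r < ‖t‖) :
    Summable fun n : ℕ => (t⁻¹ • a) ^ n := by
  have hr₀ : 0 ≤ r := ge_of_tendsto' hr fun n => by positivity
  have hrt : ‖t‖⁻¹ * r < 1 := by rwa [inv_mul_lt_iff₀ (hr₀.trans_lt ht), mul_one]
  refine summable_of_tendsto_norm_rpow_one_div hrt ?_
  simp only [smul_pow, norm_smul, norm_pow, norm_inv]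
  exact tendsto_mul_rpow_one_div (fun n => by positivity) (fun n => norm_nonneg _)
    (tendsto_pow_rpow_one_div (by positivity)) hr

end NthRoots

section OrderedModules

lemma monotone_of_map_pos {F E G : Type*} [AddCommGroup E] [PartialOrder E] [IsOrderedAddMonoid E]
    [AddCommGroup G] [PartialOrder G] [IsOrderedAddMonoid G] [FunLike F E G]
    [AddMonoidHomClass F E G] {ℓ : F} (hℓ : ∀ z, 0 < z → 0 < ℓ z) : Monotone ℓ :=
  (monotone_iff_map_nonneg ℓ).2 fun z hz =>
    hz.eq_or_lt.elim (fun h => by rw [← h, map_zero]) fun h => (hℓ z h).le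

variable {R E : Type*} [Semiring R] [AddCommMonoid E] [Module R E] [TopologicalSpace E]
  {K : E →L[R] E} {s : R} {x : E}

lemma pow_apply_eq_pow_smul (hx : K x = s • x) (n : ℕ) : (K ^ n) x = s ^ n • x := by
  induction n with
  | zero => simp
  | succ n ih => rw [pow_succ, mul_apply_eq_comp, hx, map_smul, ih, smul_smul, ← pow_succ']

variable [PartialOrder E]

lemma monotone_pow_of_monotone (hK : Monotone K) (n : ℕ) : Monotone (K ^ n) := by
  rw [FunLike.coe_pow_eq_iterate]
  exact hK.iterate n

lemma pow_apply_nonneg (hK : Monotone K) (hx : 0 ≤ x) (n : ℕ) : 0 ≤ (K ^ n) x :=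
  map_zero (K ^ n) ▸ monotone_pow_of_monotone hK n hx

lemma pow_apply_le_pow_smul [Preorder R] [PosSMulMono R E] (hK : Monotone K) (hs : 0 ≤ s)
    (hx : K x ≤ s • x) (n : ℕ) : (K ^ n) x ≤ s ^ n • x := by
  induction n with
  | zero => simp
  | succ n ih =>
    calc (K ^ (n + 1)) x = (K ^ n) (K x) := by rw [pow_succ, mul_apply_eq_comp]
      _ ≤ (K ^ n) (s • x) := monotone_pow_of_monotone hK n hx
      _ = s • (K ^ n) x := map_smul _ _ _
      _ ≤ s • s ^ n • x := smul_le_smul_of_nonneg_left ih hs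
      _ = s ^ (n + 1) • x := by rw [smul_smul, ← pow_succ']

end OrderedModules

section ApproximateEigenvectors

variable {𝕜 E : Type*} [NontriviallyNormedField 𝕜] [NormedAddCommGroup E] [NormedSpace 𝕜 E]
  {K : E →L[𝕜] E} {a : 𝕜} {z : ℕ → E}

lemma tendsto_pow_apply_sub_pow_smul
    (hz : Tendsto (fun n => K (z n) - a • z n) atTop (𝓝 0)) (j : ℕ) :
    Tendsto (fun n => (K ^ j) (z n) - a ^ j • z n) atTop (𝓝 0) := by
  set c : E →L[𝕜] E := algebraMap 𝕜 _ a with hc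
  let Q : E →L[𝕜] E := ∑ i ∈ Finset.range j, K ^ i * c ^ (j - 1 - i)
  have hfactor : Q * (K - c) = K ^ j - c ^ j :=
    (Algebra.commute_algebraMap_right a K).geom_sum₂_mul j
  have hQ := (Q.continuous.tendsto 0).comp hz
  rw [map_zero] at hQ
  refine hQ.congr fun n => ?_
  simpa [hc, Algebra.algebraMap_eq_smul_one, smul_pow] using congr($hfactor (z n))

lemma exists_subseq_tendsto_eigenvector {k : ℕ} (hK : IsCompactOperator (⇑(K ^ k))) (ha : a ≠ 0)
    {r : ℝ} (hzr : ∀ n, ‖z n‖ ≤ r) (hz : Tendsto (fun n => K (z n) - a • z n) atTop (𝓝 0)) :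
    ∃ w, ∃ φ : ℕ → ℕ, StrictMono φ ∧ Tendsto (z ∘ φ) atTop (𝓝 w) ∧ K w = a • w := by
  have hcompact : IsCompact (closure ((K ^ k) '' Metric.closedBall 0 r)) :=
    hK.isCompact_closure_image_closedBall (f := ((K ^ k : E →L[𝕜] E) : E →ₗ[𝕜] E)) r
  obtain ⟨y, -, φ, hφ, hy⟩ := hcompact.tendsto_subseq (x := fun n => (K ^ k) (z n))
    fun n => subset_closure ⟨z n, by simpa using hzr n, rfl⟩
  have hw : Tendsto (z ∘ φ) atTop (𝓝 ((a ^ k)⁻¹ • y)) := by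
    have hak : a ^ k ≠ 0 := pow_ne_zero k ha
    have hdiff := (tendsto_pow_apply_sub_pow_smul hz k).comp hφ.tendsto_atTop
    have hscaled := (hy.sub hdiff).const_smul (a ^ k)⁻¹
    rw [sub_zero] at hscaled
    refine hscaled.congr fun n => ?_
    simp [smul_smul, inv_mul_cancel₀ hak]
  refine ⟨_, φ, hφ, hw, sub_eq_zero.1 (tendsto_nhds_unique ?_ (hz.comp hφ.tendsto_atTop))⟩
  exact ((K.continuous.tendsto _).comp hw).sub (hw.const_smul a)

end ApproximateEigenvectors

/-- `e` is an order unit of the ordered normed space `E` and the norm of `E` is the corresponding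
order unit norm: closed balls are the order intervals `[-(c • e), c • e]`. The model is the
constant function `1` in a space of bounded functions. -/
structure IsNormingOrderUnit {E : Type*} [NormedAddCommGroup E] [NormedSpace ℝ E] [PartialOrder E]
    (e : E) : Prop where
  norm_le_iff : ∀ {c : ℝ}, 0 ≤ c → ∀ {x : E}, ‖x‖ ≤ c ↔ -(c • e) ≤ x ∧ x ≤ c • e

section OrderedSpace

variable {E : Type*} [NormedAddCommGroup E] [NormedSpace ℝ E] [PartialOrder E] {K : E →L[ℝ] E}
  {lam : ℝ} {e f x y : E}

lemma exists_le_and_apply_eq_smul_sub [IsOrderedAddMonoid E] [PosSMulMono ℝ E]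
    [OrderClosedTopology E] [CompleteSpace E] (hK : Monotone K)
    (hlam : Tendsto (fun n : ℕ => ‖K ^ n‖ ^ (1 / (n : ℝ))) atTop (𝓝 lam))
    {t : ℝ} (ht : lam < t) (he : 0 ≤ e) : ∃ f, e ≤ f ∧ K f = t • (f - e) := by
  have ht₀ : 0 < t := (ge_of_tendsto' hlam fun n => by positivity).trans_lt ht
  have hsum : Summable fun n : ℕ => (t⁻¹ • K) ^ n :=
    summable_inv_smul_pow hlam (ht.trans_le (le_abs_self t))
  let R : E →L[ℝ] E := ∑' n : ℕ, (t⁻¹ • K) ^ n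
  refine ⟨R e, ?_, ?_⟩
  · have hpos (n : ℕ) : 0 ≤ ((t⁻¹ • K) ^ n) e := by
      rw [smul_pow]
      exact smul_nonneg (by positivity) (pow_apply_nonneg hK he n)
    have hRe : R e = ∑' n : ℕ, ((t⁻¹ • K) ^ n) e :=
      (ContinuousLinearMap.apply ℝ E e).map_tsum hsum
    rw [hRe]
    simpa using (hsum.mapL (ContinuousLinearMap.apply ℝ E e)).le_tsum 0 fun n _ => hpos n
  · have hres : R e - t⁻¹ • K (R e) = e := by
      simpa [R] using congr($(hsum.one_sub_mul_tsum_pow) e)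
    rw [← inv_smul_eq_iff₀ ht₀.ne', eq_sub_iff_add_eq']
    exact (sub_eq_iff_eq_add.1 hres).symm

namespace IsNormingOrderUnit

lemma nonneg (he : IsNormingOrderUnit e) : 0 ≤ e := by
  simpa using ((he.norm_le_iff zero_le_one).1 (norm_zero.trans_le zero_le_one)).2

lemma norm_le_one [IsOrderedAddMonoid E] (he : IsNormingOrderUnit e) : ‖e‖ ≤ 1 := by
  rw [he.norm_le_iff zero_le_one, one_smul]
  exact ⟨neg_le_self he.nonneg, le_rfl⟩

lemma le_norm_smul (he : IsNormingOrderUnit e) (x : E) : x ≤ ‖x‖ • e :=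
  ((he.norm_le_iff (norm_nonneg x)).1 le_rfl).2

lemma neg_norm_smul_le (he : IsNormingOrderUnit e) (x : E) : -(‖x‖ • e) ≤ x :=
  ((he.norm_le_iff (norm_nonneg x)).1 le_rfl).1

lemma norm_le_norm [IsOrderedAddMonoid E] [PosSMulMono ℝ E] (he : IsNormingOrderUnit e) (hx : 0 ≤ x)
    (hxy : x ≤ y) : ‖x‖ ≤ ‖y‖ :=
  (he.norm_le_iff (norm_nonneg y)).2
    ⟨(neg_nonpos.2 (smul_nonneg (norm_nonneg y) he.nonneg)).trans hx, hxy.trans (he.le_norm_smul y)⟩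

lemma opNorm_le_norm_apply [IsOrderedAddMonoid E] [PosSMulMono ℝ E] (he : IsNormingOrderUnit e)
    (hK : Monotone K) : ‖K‖ ≤ ‖K e‖ := by
  refine K.opNorm_le_bound (norm_nonneg _) fun x => ?_
  have hKe : ‖x‖ • K e ≤ (‖K e‖ * ‖x‖) • e := by
    rw [mul_comm, mul_smul]
    exact smul_le_smul_of_nonneg_left (he.le_norm_smul _) (norm_nonneg x)
  rw [he.norm_le_iff (by positivity)]
  constructor
  · calc -((‖K e‖ * ‖x‖) • e) ≤ -(‖x‖ • K e) := neg_le_neg hKe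
      _ = K (-(‖x‖ • e)) := by rw [map_neg, map_smul]
      _ ≤ K x := hK (he.neg_norm_smul_le x)
  · calc K x ≤ K (‖x‖ • e) := hK (he.le_norm_smul x)
      _ = ‖x‖ • K e := map_smul _ _ _
      _ ≤ _ := hKe

lemma functional_apply_le [IsOrderedAddMonoid E] (he : IsNormingOrderUnit e) {ℓ : E →ₗ[ℝ] ℝ}
    (hℓ : Monotone ℓ) (L : E →L[ℝ] E) : ℓ (L e) ≤ ‖L‖ * ℓ e := by
  have hℓe : 0 ≤ ℓ e := map_zero ℓ ▸ hℓ he.nonneg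
  calc ℓ (L e) ≤ ℓ (‖L e‖ • e) := hℓ (he.le_norm_smul _)
    _ = ‖L e‖ * ℓ e := by rw [map_smul, smul_eq_mul]
    _ ≤ ‖L‖ * ℓ e := by gcongr; exact L.unit_le_opNorm e he.norm_le_one

variable [IsOrderedAddMonoid E] [PosSMulMono ℝ E]

lemma one_le_norm_of_le [Nontrivial E] (he : IsNormingOrderUnit e) (hf : e ≤ f) : 1 ≤ ‖f‖ := by
  have hid : ‖ContinuousLinearMap.id ℝ E‖ ≤ ‖e‖ := he.opNorm_le_norm_apply monotone_id
  rw [ContinuousLinearMap.norm_id] at hid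
  exact hid.trans (he.norm_le_norm he.nonneg hf)

/-- Collatz–Wielandt upper bound for the spectral radius. -/
lemma spectralRadius_le_of_apply_le_smul [Nontrivial E] (he : IsNormingOrderUnit e)
    (hK : Monotone K) (hlam : Tendsto (fun n : ℕ => ‖K ^ n‖ ^ (1 / (n : ℝ))) atTop (𝓝 lam))
    {s : ℝ} (hs : 0 ≤ s) (hef : e ≤ f) (hf : K f ≤ s • f) : lam ≤ s := by
  have hnorm (n : ℕ) : ‖K ^ n‖ ≤ s ^ n * ‖f‖ := by
    have hKn := monotone_pow_of_monotone hK n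
    calc ‖K ^ n‖ ≤ ‖(K ^ n) e‖ := he.opNorm_le_norm_apply hKn
      _ ≤ ‖s ^ n • f‖ :=
        he.norm_le_norm (pow_apply_nonneg hK he.nonneg n)
          ((hKn hef).trans (pow_apply_le_pow_smul hK hs hf n))
      _ = s ^ n * ‖f‖ := by rw [norm_smul, Real.norm_of_nonneg (by positivity)]
  have hf₀ : 0 < ‖f‖ := zero_lt_one.trans_le (he.one_le_norm_of_le hef)
  refine le_of_tendsto_of_tendsto' hlam (tendsto_mul_const_rpow_one_div
    (fun n => by positivity) hf₀ (tendsto_pow_rpow_one_div hs)) fun n => ?_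
  exact Real.rpow_le_rpow (norm_nonneg _) (hnorm n) (by positivity)

variable [OrderClosedTopology E] [CompleteSpace E]

lemma exists_approximate_eigenvector [Nontrivial E] (he : IsNormingOrderUnit e) (hK : Monotone K)
    (hlam : Tendsto (fun n : ℕ => ‖K ^ n‖ ^ (1 / (n : ℝ))) atTop (𝓝 lam))
    {ε : ℝ} (hε : 0 < ε) : ∃ z, 0 ≤ z ∧ ‖z‖ = 1 ∧ ‖K z - lam • z‖ ≤ ε + ε := by
  have hlam₀ : 0 ≤ lam := ge_of_tendsto' hlam fun n => by positivity
  obtain ⟨f, hef, hKf⟩ :=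
    exists_le_and_apply_eq_smul_sub hK hlam (lt_add_of_pos_right lam hε) he.nonneg
  set t := lam + ε with ht
  have hM : 1 ≤ ‖f‖ := he.one_le_norm_of_le hef
  have hM₀ : ‖f‖ ≠ 0 := (zero_lt_one.trans_le hM).ne'
  have hsmall : t * ‖f‖⁻¹ ≤ ε := by
    have hfe : ‖f‖⁻¹ • f ≤ e := by
      simpa [smul_smul, inv_mul_cancel₀ hM₀] using
        smul_le_smul_of_nonneg_left (he.le_norm_smul f) (inv_nonneg.2 (norm_nonneg f))
    have hsub : K f ≤ (t * (1 - ‖f‖⁻¹)) • f := by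
      rw [hKf, mul_smul, sub_smul, one_smul]
      exact smul_le_smul_of_nonneg_left (sub_le_sub_left hfe f) (by positivity)
    have hs : 0 ≤ t * (1 - ‖f‖⁻¹) :=
      mul_nonneg (by positivity) (sub_nonneg.2 (inv_le_one_of_one_le₀ hM))
    linarith [he.spectralRadius_le_of_apply_le_smul hK hlam hs hef hsub]
  have hz : ‖‖f‖⁻¹ • f‖ = 1 := by rw [norm_smul, norm_inv, norm_norm, inv_mul_cancel₀ hM₀]
  refine ⟨‖f‖⁻¹ • f, smul_nonneg (by positivity) (he.nonneg.trans hef), hz, ?_⟩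
  calc ‖K (‖f‖⁻¹ • f) - lam • ‖f‖⁻¹ • f‖ = ‖ε • ‖f‖⁻¹ • f - (t * ‖f‖⁻¹) • e‖ := by
        rw [map_smul, hKf, ht]
        congr 1
        module
    _ ≤ ‖ε • ‖f‖⁻¹ • f‖ + ‖(t * ‖f‖⁻¹) • e‖ := norm_sub_le _ _
    _ = ε * 1 + t * ‖f‖⁻¹ * ‖e‖ := by
        rw [norm_smul, hz, norm_smul, Real.norm_of_nonneg hε.le,
          Real.norm_of_nonneg (by positivity)]
    _ ≤ ε * 1 + ε * 1 := by gcongr; exact he.norm_le_one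
    _ = ε + ε := by ring

/-- A Krein–Rutman theorem. -/
theorem exists_nonneg_eigenvector (he : IsNormingOrderUnit e) (hK : Monotone K) {k : ℕ}
    (hcompact : IsCompactOperator (⇑(K ^ k)))
    (hlam : Tendsto (fun n : ℕ => ‖K ^ n‖ ^ (1 / (n : ℝ))) atTop (𝓝 lam)) (hlam₀ : 0 < lam) :
    ∃ z, 0 ≤ z ∧ ‖z‖ = 1 ∧ K z = lam • z := by
  have : Nontrivial E := by
    obtain ⟨n, hn, hn₀⟩ :=
      ((hlam.eventually_const_lt hlam₀).and (eventually_ne_atTop 0)).exists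
    contrapose! hn
    rw [Subsingleton.elim (K ^ n) 0, norm_zero, Real.zero_rpow (by positivity)]
  choose z hz₀ hz₁ hKz using fun n : ℕ =>
    he.exists_approximate_eigenvector hK hlam (ε := 1 / ((n : ℝ) + 1)) (by positivity)
  have happrox : Tendsto (fun n => K (z n) - lam • z n) atTop (𝓝 0) := by
    refine squeeze_zero_norm hKz ?_
    have hε := tendsto_one_div_add_atTop_nhds_zero_nat (𝕜 := ℝ)
    simpa using hε.add hε
  obtain ⟨w, φ, -, hw, hKw⟩ :=
    exists_subseq_tendsto_eigenvector hcompact hlam₀.ne' (fun n => (hz₁ n).le) happrox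
  exact ⟨w, ge_of_tendsto' hw fun n => hz₀ (φ n),
    tendsto_nhds_unique hw.norm (by simp [hz₁]), hKw⟩

theorem tendsto_functional_pow_rpow_one_div (he : IsNormingOrderUnit e) (hK : Monotone K) {k : ℕ}
    (hcompact : IsCompactOperator (⇑(K ^ k)))
    (hlam : Tendsto (fun n : ℕ => ‖K ^ n‖ ^ (1 / (n : ℝ))) atTop (𝓝 lam))
    {ℓ : E →ₗ[ℝ] ℝ} (hℓ : ∀ z, 0 < z → 0 < ℓ z) :
    Tendsto (fun n : ℕ => ℓ ((K ^ n) e) ^ (1 / (n : ℝ))) atTop (𝓝 lam) := by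
  have hℓ_mono : Monotone ℓ := monotone_of_map_pos hℓ
  have hℓe : 0 ≤ ℓ e := map_zero ℓ ▸ hℓ_mono he.nonneg
  have hupper (n : ℕ) : ℓ ((K ^ n) e) ≤ ‖K ^ n‖ * (ℓ e + 1) :=
    (he.functional_apply_le hℓ_mono _).trans (by gcongr; exact le_add_of_nonneg_right zero_le_one)
  have hupper_lim : Tendsto (fun n : ℕ => (‖K ^ n‖ * (ℓ e + 1)) ^ (1 / (n : ℝ))) atTop (𝓝 lam) :=
    tendsto_mul_const_rpow_one_div (fun n => norm_nonneg _) (by positivity) hlam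
  have hlam₀ : 0 ≤ lam := ge_of_tendsto' hlam fun n => by positivity
  rcases hlam₀.eq_or_lt with rfl | hlam_pos
  · have hlower (n : ℕ) : 0 ≤ ℓ ((K ^ n) e) :=
      map_zero ℓ ▸ hℓ_mono (pow_apply_nonneg hK he.nonneg n)
    exact tendsto_rpow_one_div_of_le_of_le (fun _ => le_rfl) hlower hupper
      tendsto_zero_rpow_one_div hupper_lim
  · obtain ⟨z, hz₀, hz₁, hKz⟩ := he.exists_nonneg_eigenvector hK hcompact hlam hlam_pos
    have hℓz : 0 < ℓ z := hℓ z (hz₀.lt_of_ne' (norm_ne_zero_iff.1 (hz₁ ▸ one_ne_zero)))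
    have hz_le : z ≤ e := by simpa [hz₁] using he.le_norm_smul z
    have hlower (n : ℕ) : lam ^ n * ℓ z ≤ ℓ ((K ^ n) e) := by
      rw [← smul_eq_mul, ← map_smul, ← pow_apply_eq_pow_smul hKz]
      exact hℓ_mono (monotone_pow_of_monotone hK n hz_le)
    have hlower_lim : Tendsto (fun n : ℕ => (lam ^ n * ℓ z) ^ (1 / (n : ℝ))) atTop (𝓝 lam) :=
      tendsto_mul_const_rpow_one_div (fun n => by positivity) hℓz (tendsto_pow_rpow_one_div hlam₀)
    exact tendsto_rpow_one_div_of_le_of_le (fun n => by positivity) hlower hupper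
      hlower_lim hupper_lim

end IsNormingOrderUnit

end OrderedSpace

section BoundedContinuousFunctions

variable {T : Type*} [TopologicalSpace T]

instance : PosSMulMono ℝ (T →ᵇ ℝ) where
  smul_le_smul_of_nonneg_left _ hc _ _ hfg x := mul_le_mul_of_nonneg_left (hfg x) hc

lemma isNormingOrderUnit_one : IsNormingOrderUnit (1 : T →ᵇ ℝ) where
  norm_le_iff {c} hc f := by
    have hlower : -(c • 1) ≤ f ↔ ∀ x, -c ≤ f x :=
      forall_congr' fun x => by simp
    have hupper : f ≤ c • 1 ↔ ∀ x, f x ≤ c :=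
      forall_congr' fun x => by simp
    simp only [BoundedContinuousFunction.norm_le hc, Real.norm_eq_abs, abs_le, forall_and, hlower,
      hupper]

variable [MeasurableSpace T] [OpensMeasurableSpace T] (μ : Measure T) [IsFiniteMeasure μ]

/-- Integration against `μ`, as a linear functional on bounded continuous functions. -/
noncomputable def integralFunctional : (T →ᵇ ℝ) →ₗ[ℝ] ℝ where
  toFun f := ∫ x, f x ∂μ
  map_add' f g := integral_add (f.integrable μ) (g.integrable μ)
  map_smul' c f := integral_const_mul c f

lemma integralFunctional_pos [μ.IsOpenPosMeasure] {f : T →ᵇ ℝ} (hf : 0 < f) :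
    0 < integralFunctional μ f := by
  refine (integral_pos_iff_support_of_nonneg hf.le (f.integrable μ)).2 ?_
  refine f.continuous.isOpen_support.measure_pos μ (Function.support_nonempty_iff.2 ?_)
  exact fun h => hf.ne' (DFunLike.coe_injective h)

end BoundedContinuousFunctions

theorem persistence_exponent_existence_general
    {T : Type*} [TopologicalSpace T] [MeasurableSpace T] [OpensMeasurableSpace T]
    (K : (T →ᵇ ℝ) →L[ℝ] (T →ᵇ ℝ))
    (hpos : ∀ g : T →ᵇ ℝ, (∀ x, 0 ≤ g x) → ∀ x, 0 ≤ (K g) x)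
    (k : ℕ) (hcompact : IsCompactOperator (⇑(K ^ k)))
    (lam : ℝ)
    (hlam : Tendsto (fun n : ℕ => ‖K ^ n‖ ^ (1 / (n : ℝ))) atTop (𝓝 lam))
    (μ : Measure T) [IsFiniteMeasure μ] [μ.IsOpenPosMeasure] :
    Tendsto (fun n : ℕ => (∫ x, ((K ^ n) (1 : T →ᵇ ℝ)) x ∂μ) ^ (1 / (n : ℝ)))
      atTop (𝓝 lam) :=
  isNormingOrderUnit_one.tendsto_functional_pow_rpow_one_div ((monotone_iff_map_nonneg K).2 hpos)
    hcompact hlam (ℓ := integralFunctional μ) fun _ => integralFunctional_pos μ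

/-- Let `S` be a Borel subset of a Polish space, let `K` be a bounded
linear operator on `C_b(S)` which is non-negative and such that `K^k` is compact for some
`k ≥ 1`, and let `μ` be a Borel probability measure on `S` charging every nonempty open set.
Then `(∫_S (K^n 1) dμ)^(1/n)` converges to the spectral radius `λ(K)` as `n → ∞`. -/
theorem persistence_exponent_existence
    {X : Type*} [TopologicalSpace X] [PolishSpace X]
    [MeasurableSpace X] [BorelSpace X]
    (S : Set X) (hS : MeasurableSet S)
    (K : (S →ᵇ ℝ) →L[ℝ] (S →ᵇ ℝ))
    (hpos : ∀ g : S →ᵇ ℝ, (∀ x, 0 ≤ g x) → ∀ x, 0 ≤ (K g) x)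
    (k : ℕ) (hk : 1 ≤ k) (hcompact : IsCompactOperator (⇑(K ^ k)))
    (lam : ℝ)
    (hlam : Tendsto (fun n : ℕ => ‖K ^ n‖ ^ (1 / (n : ℝ))) atTop (𝓝 lam))
    (μ : Measure S) [IsProbabilityMeasure μ]
    (hμ : ∀ U : Set S, IsOpen U → U.Nonempty → 0 < μ U) :
    Tendsto (fun n : ℕ => (∫ x, ((K ^ n) (1 : S →ᵇ ℝ)) x ∂μ) ^ (1 / (n : ℝ)))
      atTop (𝓝 lam) :=
  have : μ.IsOpenPosMeasure := ⟨fun U hU hne => (hμ U hU hne).ne'⟩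
  persistence_exponent_existence_general K hpos k hcompact lam hlam μ
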